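/- Suppose H_0 is twice continuously differentiable on [0,1]. Then for every n ≥ 0 the function h_{n+1} is differentiable at 1 and h_{n+1}'(1) = 0. -/

import Mathlib

open Real MeasureTheory Filter Set
open scoped ENNReal NNReal Classical

namespace OCF

/-- The golden ratio `G = (1+√5)/2`. -/
noncomputable def G : ℝ := (1 + Real.sqrt 5) / 2

/-- `g = (√5-1)/2`. -/
noncomputable def gg : ℝ := (Real.sqrt 5 - 1) / 2

/-- The odd Gauss map. -/
noncomputable def T (x : ℝ) : ℝ :=
  if x = 0 then 0
  else if Odd ⌊1 / x⌋ then Int.fract (1 / x) else 1 - Int.fract (1 / x)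

/-- `eps x n` is `ε_n(x)`; by convention `ε_0(x) = 1`. -/
noncomputable def eps (x : ℝ) : ℕ → ℤ
  | 0 => 1
  | n + 1 => if Odd ⌊1 / (T^[n] x)⌋ then 1 else -1

/-- `a x n` is the `n`-th odd partial quotient `a_n(x)` (for `n ≥ 1`). -/
noncomputable def a (x : ℝ) : ℕ → ℤ
  | 0 => 1
  | n + 1 => if Odd ⌊1 / (T^[n] x)⌋ then ⌊1 / (T^[n] x)⌋ else 1 + ⌊1 / (T^[n] x)⌋

/-- `r x n = r_n(x) = a_n(x) + ε_n(x) Tⁿ(x)` for `n ≥ 1`. -/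
noncomputable def r (x : ℝ) (n : ℕ) : ℝ := (a x n : ℝ) + (eps x n : ℝ) * T^[n] x

/-- The distribution functions: `H μ 0 x = μ([0,x])` and, for `n ≥ 1`,
`H μ n x = μ({y ∈ (0,1) : y irrational, 1/r_{n+1}(y) < x})`. -/
noncomputable def H (μ : Measure ℝ) : ℕ → ℝ → ℝ
  | 0 => fun x => (μ (Set.Icc 0 x)).toReal
  | n + 1 => fun x =>
      (μ {y | y ∈ Set.Ioo (0 : ℝ) 1 ∧ Irrational y ∧ 1 / r y (n + 2) < x}).toReal

/-- `h μ n x = H_n'(x) / ((x+G-1)⁻¹ - (x-G-1)⁻¹)`, the derivative being taken within `[0,1]`. -/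
noncomputable def h (μ : Measure ℝ) (n : ℕ) (x : ℝ) : ℝ :=
  derivWithin (H μ n) (Set.Icc 0 1) x / ((x + G - 1)⁻¹ - (x - G - 1)⁻¹)

/-- `η = 4g Σ_{i odd} 1/((G+i) i (i+2))`. -/
noncomputable def eta : ℝ :=
  4 * gg * ∑' m : ℕ, 1 / ((G + (2 * (m : ℝ) + 1)) * (2 * (m : ℝ) + 1) * (2 * (m : ℝ) + 3))

end OCF

open OCF

/-!
The branches of `T` over the odd integer `k` are `t ↦ 1 / t - k` and `t ↦ (k + 2) - 1 / t`, and
they are exchanged by the reflection `x ↦ 2 - x` of the target. So the density of the image under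
`T` of any law with a `C¹` density extends from `[0, 1]` to a `C¹` function near `[0, 2]` that is
symmetric about `1`. By induction on `n` this applies to `T^n`, so the derivative of `H_{n+1}` has
such an extension; the weight `(x + G - 1)⁻¹ - (x - G - 1)⁻¹` is symmetric about `1` too, and a
differentiable function symmetric about `1` has derivative `0` there.
-/

/-! ### Calculus -/

theorem eq_zero_of_hasDerivAt_of_reflect_eq {𝕜 E : Type*} [NontriviallyNormedField 𝕜] [CharZero 𝕜]
    [NormedAddCommGroup E] [NormedSpace 𝕜 E] {f : 𝕜 → E} {f' : E} {c : 𝕜}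
    (hf : HasDerivAt f f' c) (hsymm : ∀ x, f (2 * c - x) = f x) : f' = 0 := by
  have hreflect : HasDerivAt f (-f') c := by
    have hf' : HasDerivAt f f' (2 * c - c) := by rwa [two_mul, add_sub_cancel_right]
    simpa only [hsymm] using hf'.comp_const_sub (2 * c) c
  have : IsAddTorsionFree E := .of_isTorsionFree 𝕜 E
  exact self_eq_neg.1 (hf.unique hreflect)

theorem exists_contDiff_eqOn_Icc {E : Type*} [NormedAddCommGroup E] [NormedSpace ℝ E]
    [CompleteSpace E] {a b : ℝ} (hab : a < b) {n : ℕ} {f : ℝ → E}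
    (hf : ContDiffOn ℝ n f (Icc a b)) : ∃ g : ℝ → E, ContDiff ℝ n g ∧ EqOn f g (Icc a b) := by
  induction n generalizing f with
  | zero =>
    refine ⟨IccExtend hab.le ((Icc a b).domRestrict f), ?_, fun x hx ↦ ?_⟩
    · exact contDiff_zero.2 (continuousOn_iff_continuous_domRestrict.1 hf.continuousOn).Icc_extend'
    · rw [IccExtend_of_mem _ _ hx, domRestrict_apply]
  | succ n ih =>
    rw [Nat.cast_succ] at hf ⊢
    obtain ⟨hdiff, -, hderiv⟩ := (contDiffOn_succ_iff_derivWithin (uniqueDiffOn_Icc hab)).1 hf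
    obtain ⟨g, hg, hfg⟩ := ih hderiv
    have hprim (x : ℝ) : HasDerivAt (fun x ↦ f a + ∫ t in a..x, g t) (g x) x :=
      (hg.continuous.integral_hasStrictDerivAt a x).hasDerivAt.const_add _
    refine ⟨fun x ↦ f a + ∫ t in a..x, g t, contDiff_succ_iff_deriv.2
      ⟨fun x ↦ (hprim x).differentiableAt, by simp, ?_⟩, fun x hx ↦ ?_⟩
    · rwa [funext fun x ↦ (hprim x).deriv]
    · have hftc := intervalIntegral.integral_eq_sub_of_hasDerivAt_of_le hx.1
        (hf.continuousOn.mono (Icc_subset_Icc_right hx.2)) (fun y hy ↦ ?_)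
        (hg.continuous.intervalIntegrable a x)
      · simp [hftc]
      · have hy' : y ∈ Ioo a b := ⟨hy.1, hy.2.trans_le hx.2⟩
        rw [← hfg (Ioo_subset_Icc_self hy')]
        exact (hdiff y (Ioo_subset_Icc_self hy')).hasDerivWithinAt.hasDerivAt
          (Icc_mem_nhds hy'.1 hy'.2)

theorem contDiffOn_one_tsum_of_isPreconnected {ι 𝕜 E : Type*} [RCLike 𝕜] [NormedAddCommGroup E]
    [NormedSpace 𝕜 E] [CompleteSpace E] {f : ι → 𝕜 → E} {u : ι → ℝ} {s : Set 𝕜} {x₀ : 𝕜}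
    (hu : Summable u) (hs : IsOpen s) (hs' : IsPreconnected s)
    (hf : ∀ i, ContDiffOn 𝕜 1 (f i) s) (hbound : ∀ i, ∀ x ∈ s, ‖deriv (f i) x‖ ≤ u i)
    (hx₀ : x₀ ∈ s) (hsum : Summable (f · x₀)) :
    ContDiffOn 𝕜 1 (fun x ↦ ∑' i, f i x) s := by
  have hderiv (x : 𝕜) (hx : x ∈ s) :
      HasDerivAt (fun x ↦ ∑' i, f i x) (∑' i, deriv (f i) x) x :=
    hasDerivAt_tsum_of_isPreconnected hu hs hs'
      (fun i x hx ↦ (((hf i).differentiableOn one_ne_zero).differentiableAt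
        (hs.mem_nhds hx)).hasDerivAt) hbound hx₀ hsum hx
  refine (contDiffOn_succ_iff_deriv_of_isOpen (n := 0) hs).2
    ⟨fun x hx ↦ (hderiv x hx).differentiableAt.differentiableWithinAt, by simp, ?_⟩
  refine contDiffOn_zero.2 (ContinuousOn.congr ?_ fun x hx ↦ (hderiv x hx).deriv)
  exact continuousOn_tsum (fun i ↦ (hf i).continuousOn_deriv_of_isOpen hs le_rfl) hu hbound

/-! ### Measures on the line -/

theorem measureReal_Ico_eq_sub {μ : Measure ℝ} [IsFiniteMeasure μ] {a b : ℝ} (hab : a ≤ b) :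
    μ.real (Ico a b) = μ.real (Iio b) - μ.real (Iio a) := by
  rw [← Iio_sdiff_Iio, measureReal_sdiff (Iio_subset_Iio hab) measurableSet_Iio]

open scoped Topology in
theorem measure_singleton_eq_zero_of_continuousWithinAt {μ : Measure ℝ}
    [IsFiniteMeasureOnCompacts μ] {a c : ℝ} (hac : a < c)
    (hcont : ContinuousWithinAt (fun x ↦ μ.real (Icc a x)) (Icc a c) c) : μ {c} = 0 := by
  have hle : ∀ᶠ x in 𝓝[Ioo a c] c, μ.real {c} ≤ μ.real (Icc a c) - μ.real (Icc a x) := by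
    filter_upwards [self_mem_nhdsWithin] with x hx
    rw [← measureReal_sdiff (Icc_subset_Icc_right hx.2.le) measurableSet_Icc
      measure_Icc_lt_top.ne]
    exact measureReal_mono (by simpa [hac.le] using hx.2)
      (measure_ne_top_of_subset sdiff_subset measure_Icc_lt_top.ne)
  have hlim : Tendsto (fun x ↦ μ.real (Icc a c) - μ.real (Icc a x)) (𝓝[Ioo a c] c) (𝓝 0) := by
    simpa using (tendsto_const_nhds (x := μ.real (Icc a c))).sub
      (hcont.mono Ioo_subset_Icc_self).tendsto
  have : (𝓝[Ioo a c] c).NeBot := right_nhdsWithin_Ioo_neBot hac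
  have hreal : μ.real {c} ≤ 0 := ge_of_tendsto hlim hle
  exact (measureReal_eq_zero_iff isCompact_singleton.measure_ne_top).1
    (hreal.antisymm measureReal_nonneg)

theorem nullSingletonClass_map_of_countable_fiber {α β : Type*} [MeasurableSpace α]
    [MeasurableSpace β] [MeasurableSingletonClass β] {μ : Measure α} [NullSingletonClass μ]
    {f : α → β} (hf : Measurable f) (hfib : ∀ c, (f ⁻¹' {c}).Countable) :
    NullSingletonClass (μ.map f) where
  measure_singleton c := by
    rw [Measure.map_apply hf (measurableSet_singleton c), (hfib c).measure_zero]

/-! ### The transfer operator -/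

namespace OCF

/-- The density `f`, read in the coordinate `u = 1 / x`: the substitution contributes the
Jacobian `1 / u ^ 2`. -/
noncomputable def invDensity (f : ℝ → ℝ) (u : ℝ) : ℝ := f u⁻¹ * u⁻¹ ^ 2

/-- The transfer (Perron–Frobenius) operator of the odd Gauss map `T`, acting on densities.
The branches of `T` are `t ↦ 1 / t - k` and `t ↦ (k + 2) - 1 / t` for odd `k = 2 * m + 1`; their
inverses send `x` to `1 / (k + x)` and to `1 / (k + 2 - x)`. -/
noncomputable def transfer (f : ℝ → ℝ) (x : ℝ) : ℝ :=
  ∑' m : ℕ, (invDensity f (2 * m + 1 + x) + invDensity f (2 * m + 3 - x))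

/-- The transfer operator of the odd Gauss map, acting on distribution functions. The `m`-th term
is the mass of the points `t` of `(1 / (2 * m + 3), 1 / (2 * m + 1)]` with `T t < x`. -/
noncomputable def transferCdf (F : ℝ → ℝ) (x : ℝ) : ℝ :=
  ∑' m : ℕ, (F (2 * m + 1 : ℝ)⁻¹ - F (2 * m + 3 : ℝ)⁻¹
    - (F (2 * m + 1 + x : ℝ)⁻¹ - F (2 * m + 3 - x : ℝ)⁻¹))

theorem transfer_two_sub (f : ℝ → ℝ) (x : ℝ) : transfer f (2 - x) = transfer f x := by
  refine tsum_congr fun m ↦ ?_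
  rw [add_comm]
  congr 2 <;> ring

theorem transferCdf_congr {F₁ F₂ : ℝ → ℝ} (hF : EqOn F₁ F₂ (Icc 0 1)) {x : ℝ} (hx : x ∈ Icc 0 1) :
    transferCdf F₁ x = transferCdf F₂ x := by
  have hmem {u : ℝ} (hu : 1 ≤ u) : u⁻¹ ∈ Icc (0 : ℝ) 1 :=
    ⟨inv_nonneg.2 (zero_le_one.trans hu), inv_le_one_of_one_le₀ hu⟩
  refine tsum_congr fun m ↦ ?_
  have : (0 : ℝ) ≤ m := m.cast_nonneg
  rw [hF (hmem _), hF (hmem _), hF (hmem _), hF (hmem _)] <;> linarith [hx.1, hx.2]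

theorem hasDerivAt_comp_inv {F : ℝ → ℝ} {f' u : ℝ} (hu : u ≠ 0) (hF : HasDerivAt F f' u⁻¹) :
    HasDerivAt (fun u ↦ F u⁻¹) (-(f' * u⁻¹ ^ 2)) u :=
  (hF.comp u (hasDerivAt_inv hu)).congr_deriv (by simp)

theorem hasDerivAt_invDensity {f : ℝ → ℝ} {f' u : ℝ} (hu : u ≠ 0) (hf : HasDerivAt f f' u⁻¹) :
    HasDerivAt (invDensity f) (-(f' * u⁻¹ ^ 4 + 2 * f u⁻¹ * u⁻¹ ^ 3)) u := by
  refine ((hasDerivAt_comp_inv hu hf).mul ((hasDerivAt_inv hu).pow 2)).congr_deriv ?_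
  norm_num
  ring

theorem contDiffOn_invDensity {f : ℝ → ℝ} {n : WithTop ℕ∞} (hf : ContDiff ℝ n f) :
    ContDiffOn ℝ n (invDensity f) {0}ᶜ :=
  (hf.comp_contDiffOn (contDiffOn_inv ℝ)).mul ((contDiffOn_inv ℝ).pow 2)

theorem exists_invDensity_bound {f : ℝ → ℝ} (hf : ContDiff ℝ 1 f) {δ : ℝ} (hδ : 0 < δ) :
    ∃ C, 0 ≤ C ∧ ∀ u, δ ≤ u →
      ‖invDensity f u‖ ≤ C * u⁻¹ ^ 2 ∧ ‖deriv (invDensity f) u‖ ≤ C * u⁻¹ ^ 2 := by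
  obtain ⟨A, hA⟩ := (isCompact_Icc (a := 0) (b := δ⁻¹)).exists_bound_of_continuousOn
    hf.continuous.continuousOn
  obtain ⟨B, hB⟩ := (isCompact_Icc (a := 0) (b := δ⁻¹)).exists_bound_of_continuousOn
    (hf.continuous_deriv le_rfl).continuousOn
  have hinv {u : ℝ} (hu : δ ≤ u) : u⁻¹ ∈ Icc 0 δ⁻¹ :=
    ⟨inv_nonneg.2 (hδ.le.trans hu), inv_anti₀ hδ hu⟩
  have hA0 : 0 ≤ A := (norm_nonneg _).trans (hA _ (hinv le_rfl))
  have hB0 : 0 ≤ B := (norm_nonneg _).trans (hB _ (hinv le_rfl))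
  refine ⟨A + B * δ⁻¹ ^ 2 + 2 * A * δ⁻¹, by positivity, fun u hu ↦ ?_⟩
  obtain ⟨hw0, hwδ⟩ := hinv hu
  have hfw := hA _ (hinv hu)
  have hf'w := hB _ (hinv hu)
  have hu0 : u ≠ 0 := (hδ.trans_le hu).ne'
  rw [(hasDerivAt_invDensity hu0 (hf.differentiable one_ne_zero _).hasDerivAt).deriv, invDensity]
  generalize u⁻¹ = w at *
  have hδ0 : 0 ≤ δ⁻¹ := hw0.trans hwδ
  constructor
  · calc ‖f w * w ^ 2‖ = ‖f w‖ * w ^ 2 := by rw [norm_mul, Real.norm_of_nonneg (sq_nonneg w)]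
      _ ≤ (A + B * δ⁻¹ ^ 2 + 2 * A * δ⁻¹) * w ^ 2 := by
        gcongr
        nlinarith [mul_nonneg hA0 hδ0, mul_nonneg hB0 (sq_nonneg δ⁻¹)]
  · calc ‖-(deriv f w * w ^ 4 + 2 * f w * w ^ 3)‖
        ≤ ‖deriv f w‖ * w ^ 4 + 2 * ‖f w‖ * w ^ 3 := by
          rw [norm_neg]
          refine (norm_add_le _ _).trans_eq ?_
          simp [abs_of_nonneg hw0]
      _ = (‖deriv f w‖ * w ^ 2 + 2 * ‖f w‖ * w) * w ^ 2 := by ring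
      _ ≤ (B * δ⁻¹ ^ 2 + 2 * A * δ⁻¹) * w ^ 2 := by gcongr
      _ ≤ (A + B * δ⁻¹ ^ 2 + 2 * A * δ⁻¹) * w ^ 2 := by gcongr; linarith

theorem add_half_le_branch {x : ℝ} (hx : x ∈ Ioo (-1 / 2) (5 / 2)) (m : ℕ) :
    (m + 1 / 2 : ℝ) ≤ 2 * m + 1 + x ∧ (m + 1 / 2 : ℝ) ≤ 2 * m + 3 - x := by
  have : (0 : ℝ) ≤ m := m.cast_nonneg
  constructor <;> linarith [hx.1, hx.2]

theorem exists_summable_invDensity_bound {f : ℝ → ℝ} (hf : ContDiff ℝ 1 f) :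
    ∃ b : ℕ → ℝ, Summable b ∧ ∀ (m : ℕ) (u : ℝ), (m + 1 / 2 : ℝ) ≤ u →
      ‖invDensity f u‖ ≤ b m ∧ ‖deriv (invDensity f) u‖ ≤ b m := by
  obtain ⟨C, hC, hbound⟩ := exists_invDensity_bound hf one_half_pos
  refine ⟨fun m ↦ C * (m + 1 / 2 : ℝ)⁻¹ ^ 2, Summable.mul_left C ?_, fun m u hu ↦ ?_⟩
  · have := (Real.summable_one_div_nat_add_rpow (1 / 2) 2).2 one_lt_two
    simpa using this
  · have hu0 : 0 < u := hu.trans_lt' (by positivity)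
    have hle : C * u⁻¹ ^ 2 ≤ C * (m + 1 / 2 : ℝ)⁻¹ ^ 2 := by gcongr
    exact (hbound u (by linarith [m.cast_nonneg (α := ℝ)])).imp (·.trans hle) (·.trans hle)

theorem contDiffOn_transfer {f : ℝ → ℝ} (hf : ContDiff ℝ 1 f) :
    ContDiffOn ℝ 1 (transfer f) (Ioo (-1 / 2) (5 / 2)) := by
  obtain ⟨b, hb, hbound⟩ := exists_summable_invDensity_bound hf
  have hne {m : ℕ} {u : ℝ} (hu : (m + 1 / 2 : ℝ) ≤ u) : u ≠ 0 := (hu.trans_lt' (by positivity)).ne'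
  have hderiv {m : ℕ} {u : ℝ} (hu : (m + 1 / 2 : ℝ) ≤ u) :
      HasDerivAt (invDensity f) (deriv (invDensity f) u) u :=
    (hasDerivAt_invDensity (hne hu) (hf.differentiable one_ne_zero _).hasDerivAt
      ).differentiableAt.hasDerivAt
  have hzero : (0 : ℝ) ∈ Ioo (-1 / 2) (5 / 2) := by norm_num
  refine contDiffOn_one_tsum_of_isPreconnected (hb.add hb) isOpen_Ioo isPreconnected_Ioo
    (fun m ↦ ?_) (fun m x hx ↦ ?_) hzero (.of_norm_bounded (hb.add hb) fun m ↦ ?_)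
  · exact ((contDiffOn_invDensity hf).comp (by fun_prop)
      fun x hx ↦ hne (add_half_le_branch hx m).1).add
      ((contDiffOn_invDensity hf).comp (by fun_prop) fun x hx ↦ hne (add_half_le_branch hx m).2)
  · obtain ⟨hl, hr⟩ := add_half_le_branch hx m
    rw [(((hderiv hl).comp_const_add _ x).fun_add ((hderiv hr).comp_const_sub _ x)).deriv]
    exact norm_add_le_of_le (hbound m _ hl).2 (by simpa using (hbound m _ hr).2)
  · obtain ⟨hl, hr⟩ := add_half_le_branch hzero m
    exact norm_add_le_of_le (hbound m _ hl).1 (hbound m _ hr).1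

theorem hasDerivAt_transferCdf {F : ℝ → ℝ} (hF : ContDiff ℝ 2 F) {x : ℝ}
    (hx : x ∈ Ioo (-1 / 2) (5 / 2)) : HasDerivAt (transferCdf F) (transfer (deriv F) x) x := by
  obtain ⟨b, hb, hbound⟩ := exists_summable_invDensity_bound (f := deriv F)
    ((contDiff_succ_iff_deriv (n := 1)).1 hF).2.2
  have hderiv {m : ℕ} {u : ℝ} (hu : (m + 1 / 2 : ℝ) ≤ u) :
      HasDerivAt (fun u ↦ F u⁻¹) (-invDensity (deriv F) u) u :=
    hasDerivAt_comp_inv (hu.trans_lt' (by positivity)).ne'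
      (hF.differentiable two_ne_zero _).hasDerivAt
  have hterm (m : ℕ) (y : ℝ) (hy : y ∈ Ioo (-1 / 2) (5 / 2)) :
      HasDerivAt (fun y ↦ F (2 * m + 1 : ℝ)⁻¹ - F (2 * m + 3 : ℝ)⁻¹
          - (F (2 * m + 1 + y : ℝ)⁻¹ - F (2 * m + 3 - y : ℝ)⁻¹))
        (invDensity (deriv F) (2 * m + 1 + y) + invDensity (deriv F) (2 * m + 3 - y)) y := by
    obtain ⟨hl, hr⟩ := add_half_le_branch hy m
    exact ((((hderiv hl).comp_const_add _ y).fun_sub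
      ((hderiv hr).comp_const_sub _ y)).const_sub _).congr_deriv (by ring)
  refine hasDerivAt_tsum_of_isPreconnected (hb.add hb) isOpen_Ioo isPreconnected_Ioo hterm
    (fun m y hy ↦ ?_) (y₀ := 0) (by norm_num) (by simp) hx
  obtain ⟨hl, hr⟩ := add_half_le_branch hy m
  exact norm_add_le_of_le (hbound m _ hl).1 (hbound m _ hr).1

theorem hasDerivAt_transfer_div_inv_sub_inv_one {f : ℝ → ℝ} (hf : ContDiff ℝ 1 f) {c : ℝ}
    (hc : c ≠ 0) :
    HasDerivAt (fun x ↦ transfer f x / ((x + c - 1)⁻¹ - (x - c - 1)⁻¹)) 0 1 := by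
  have hsymm (x : ℝ) : transfer f (2 * 1 - x) / ((2 * 1 - x + c - 1)⁻¹ - (2 * 1 - x - c - 1)⁻¹) =
      transfer f x / ((x + c - 1)⁻¹ - (x - c - 1)⁻¹) := by
    rw [mul_one, transfer_two_sub, show 2 - x + c - 1 = -(x - c - 1) by ring,
      show 2 - x - c - 1 = -(x + c - 1) by ring, inv_neg, inv_neg, neg_sub_neg]
  have htransfer : DifferentiableAt ℝ (transfer f) 1 :=
    ((contDiffOn_transfer hf).differentiableOn one_ne_zero).differentiableAt
      (Ioo_mem_nhds (by norm_num) (by norm_num))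
  have hweight : (1 + c - 1)⁻¹ - (1 - c - 1)⁻¹ ≠ 0 := by
    rw [add_sub_cancel_left, sub_right_comm, sub_self, zero_sub, inv_neg, sub_neg_eq_add, ← two_mul]
    exact mul_ne_zero two_ne_zero (inv_ne_zero hc)
  have hdiff : DifferentiableAt ℝ
      (fun x ↦ transfer f x / ((x + c - 1)⁻¹ - (x - c - 1)⁻¹)) 1 :=
    htransfer.fun_div (.fun_sub (.fun_inv (by fun_prop) (by simpa using hc))
      (.fun_inv (by fun_prop) (by simpa using hc))) hweight
  exact hdiff.hasDerivAt.congr_deriv (eq_zero_of_hasDerivAt_of_reflect_eq hdiff.hasDerivAt hsymm)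

/-! ### The odd Gauss map -/

theorem measurable_T : Measurable T := by
  have hinv : Measurable fun x : ℝ ↦ 1 / x := measurable_const.div measurable_id
  have hfract : Measurable fun x : ℝ ↦ Int.fract (1 / x) := measurable_fract.comp hinv
  exact .ite (measurableSet_singleton 0) measurable_const <|
    .ite (Int.measurable_floor.comp hinv (.of_discrete (s := {k : ℤ | Odd k}))) hfract
      (measurable_const.sub hfract)

theorem T_mem_Icc (t : ℝ) : T t ∈ Icc (0 : ℝ) 1 := by
  have hnonneg := Int.fract_nonneg (1 / t)
  have hlt := Int.fract_lt_one (1 / t)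
  unfold T
  split_ifs <;> constructor <;> linarith

theorem countable_T_preimage_singleton (c : ℝ) : (T ⁻¹' {c}).Countable := by
  refine ((countable_range fun k : ℤ ↦ 1 / (k + c : ℝ)).union
    (countable_range fun k : ℤ ↦ 1 / (k + (1 - c) : ℝ)) |>.insert 0).mono ?_
  rintro t rfl
  have hfloor := Int.floor_add_fract (1 / t)
  unfold T
  split_ifs with hzero hodd
  · exact .inl hzero
  · exact .inr (.inl ⟨⌊1 / t⌋, by simp only [hfloor, one_div_one_div]⟩)
  · exact .inr (.inr ⟨⌊1 / t⌋, by simp only [sub_sub_cancel, hfloor, one_div_one_div]⟩)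

theorem T_eq_min {t : ℝ} (ht : t ≠ 0) {k : ℤ} (hk : Odd k) (htk : t⁻¹ ∈ Ico (k : ℝ) (k + 2)) :
    T t = min (t⁻¹ - k) (k + 2 - t⁻¹) := by
  have hfloor := Int.floor_add_fract t⁻¹
  rw [T, if_neg ht, one_div]
  rcases lt_or_ge t⁻¹ (k + 1) with hlt | hge
  · have hfloor_eq : ⌊t⁻¹⌋ = k := Int.floor_eq_iff.2 ⟨htk.1, hlt⟩
    rw [hfloor_eq] at hfloor ⊢
    rw [if_pos hk, min_eq_left (by linarith)]
    linarith
  · have hfloor_eq : ⌊t⁻¹⌋ = k + 1 :=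
      Int.floor_eq_iff.2 (by push_cast; exact ⟨hge, by linarith [htk.2]⟩)
    rw [hfloor_eq] at hfloor ⊢
    push_cast at hfloor
    rw [if_neg (Int.not_odd_iff_even.2 hk.add_one), min_eq_right (by linarith)]
    linarith

theorem irrational_T {t : ℝ} (ht : Irrational t) : Irrational (T t) := by
  have hfract : Irrational (Int.fract (1 / t)) := by
    rw [one_div]
    exact ht.inv.sub_intCast ⌊t⁻¹⌋
  unfold T
  split_ifs with hzero
  · exact absurd hzero ht.ne_zero
  · exact hfract
  · exact_mod_cast hfract.intCast_sub 1

theorem irrational_iterate_T {t : ℝ} (ht : Irrational t) (n : ℕ) : Irrational (T^[n] t) :=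
  Function.Iterate.rec Irrational ht (fun _ ↦ irrational_T) n

theorem one_div_r_succ (y : ℝ) (n : ℕ) (hy : T^[n] y ≠ 0) : 1 / r y (n + 1) = T^[n] y := by
  have hfloor := Int.floor_add_fract (1 / T^[n] y)
  have hr : r y (n + 1) = 1 / T^[n] y := by
    simp only [r, a, eps, Function.iterate_succ_apply', T, if_neg hy]
    split_ifs <;> push_cast <;> linarith
  rw [hr, one_div_one_div]

/-- The `m`-th cylinder of the odd Gauss map: the points `t` with `2 * m + 1 ≤ 1 / t < 2 * m + 3`,
on which `T t` is the distance from `1 / t` to the nearest odd integer. -/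
def oddCell (m : ℕ) : Set ℝ := Ioc (2 * m + 3 : ℝ)⁻¹ (2 * m + 1 : ℝ)⁻¹

theorem pairwise_disjoint_oddCell : Pairwise (Function.onFun Disjoint oddCell) := by
  have hanti : Antitone fun m : ℕ ↦ (2 * m + 1 : ℝ)⁻¹ := fun m n hmn ↦ by dsimp only; gcongr
  convert hanti.pairwise_disjoint_on_Ioc_succ using 3 with m
  simp only [oddCell, Nat.succ_eq_succ, Nat.cast_succ]
  ring_nf

theorem iUnion_oddCell : ⋃ m, oddCell m = Ioc 0 1 := by
  refine (iUnion_subset fun m ↦ Ioc_subset_Ioc (by positivity) ?_).antisymm fun t ht ↦ ?_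
  · exact inv_le_one_of_one_le₀ (by linarith [m.cast_nonneg (α := ℝ)])
  · have hone : 1 ≤ t⁻¹ := (one_le_inv₀ ht.1).2 ht.2
    have hfloor := Nat.floor_le (a := (t⁻¹ - 1) / 2) (by linarith)
    have hlt := Nat.lt_floor_add_one ((t⁻¹ - 1) / 2)
    refine mem_iUnion.2 ⟨⌊(t⁻¹ - 1) / 2⌋₊, ?_, ?_⟩
    · exact inv_lt_of_inv_lt₀ ht.1 (by linarith)
    · exact (le_inv_comm₀ ht.1 (by positivity)).2 (by linarith)

theorem T_lt_iff_of_mem_oddCell {m : ℕ} {t x : ℝ} (ht : t ∈ oddCell m) (hx : x ∈ Icc 0 1) :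
    T t < x ↔ t ∉ Icc (2 * m + 3 - x : ℝ)⁻¹ (2 * m + 1 + x : ℝ)⁻¹ := by
  have ht0 : 0 < t := ht.1.trans' (by positivity)
  have : (0 : ℝ) ≤ m := m.cast_nonneg
  have hinv : t⁻¹ ∈ Ico (2 * m + 1 : ℝ) (2 * m + 3) :=
    ⟨(le_inv_comm₀ (by positivity) ht0).2 ht.2, inv_lt_of_inv_lt₀ (by positivity) ht.1⟩
  have hT : T t = min (t⁻¹ - (2 * m + 1)) (2 * m + 3 - t⁻¹) := by
    have := T_eq_min ht0.ne' (odd_two_mul_add_one (m : ℤ))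
      (by push_cast; exact ⟨hinv.1, by linarith [hinv.2]⟩)
    rw [this]
    push_cast
    ring_nf
  rw [hT, mem_Icc, inv_le_comm₀ (by linarith [hx.2]) ht0, le_inv_comm₀ ht0 (by linarith [hx.1]),
    min_lt_iff, not_and_or, not_le, not_le, or_comm]
  exact or_congr (by constructor <;> intro <;> linarith) (by constructor <;> intro <;> linarith)

theorem T_preimage_Iio_inter_oddCell {x : ℝ} (hx : x ∈ Icc 0 1) (m : ℕ) :
    T ⁻¹' Iio x ∩ oddCell m = oddCell m \ Icc (2 * m + 3 - x : ℝ)⁻¹ (2 * m + 1 + x : ℝ)⁻¹ := by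
  ext t
  rw [inter_comm]
  exact and_congr_right fun ht ↦ T_lt_iff_of_mem_oddCell ht hx

/-! ### Pushing laws forward by the odd Gauss map -/

section Law

variable {ν : Measure ℝ} [IsFiniteMeasure ν]

theorem measureReal_T_preimage_Iio_inter_oddCell [NullSingletonClass ν] {x : ℝ}
    (hx : x ∈ Icc 0 1) (m : ℕ) :
    ν.real (T ⁻¹' Iio x ∩ oddCell m) =
      ν.real (Iio (2 * m + 1 : ℝ)⁻¹) - ν.real (Iio (2 * m + 3 : ℝ)⁻¹)
        - (ν.real (Iio (2 * m + 1 + x : ℝ)⁻¹) - ν.real (Iio (2 * m + 3 - x : ℝ)⁻¹)) := by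
  have : (0 : ℝ) ≤ m := m.cast_nonneg
  obtain ⟨hx0, hx1⟩ := hx
  have hsub : Ico (2 * m + 3 - x : ℝ)⁻¹ (2 * m + 1 + x : ℝ)⁻¹ ⊆
      Ico (2 * m + 3 : ℝ)⁻¹ (2 * m + 1 : ℝ)⁻¹ :=
    Ico_subset_Ico (inv_anti₀ (by linarith) (by linarith)) (inv_anti₀ (by linarith) (by linarith))
  have hae : (T ⁻¹' Iio x ∩ oddCell m : Set ℝ) =ᵐ[ν]
      (Ico (2 * m + 3 : ℝ)⁻¹ (2 * m + 1 : ℝ)⁻¹ \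
        Ico (2 * m + 3 - x : ℝ)⁻¹ (2 * m + 1 + x : ℝ)⁻¹ : Set ℝ) := by
    rw [T_preimage_Iio_inter_oddCell ⟨hx0, hx1⟩]
    exact Ico_ae_eq_Ioc.symm.diff Ico_ae_eq_Icc.symm
  rw [measureReal_congr hae, measureReal_sdiff hsub measurableSet_Ico,
    measureReal_Ico_eq_sub (inv_anti₀ (by linarith) (by linarith)),
    measureReal_Ico_eq_sub (inv_anti₀ (by linarith) (by linarith))]

theorem measureReal_eq_tsum_inter_oddCell (hν : ∀ᵐ t ∂ν, t ∈ Ioc 0 1) {s : Set ℝ}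
    (hs : MeasurableSet s) : ν.real s = ∑' m, ν.real (s ∩ oddCell m) := by
  have hcover : s =ᵐ[ν] ⋃ m, s ∩ oddCell m := by
    rw [← inter_iUnion, iUnion_oddCell]
    filter_upwards [hν] with t ht
    exact propext ⟨fun h ↦ ⟨h, ht⟩, And.left⟩
  rw [measureReal_congr hcover, measureReal_def, measure_iUnion
    (pairwise_disjoint_oddCell.mono fun _ _ h ↦ h.mono inter_subset_right inter_subset_right)
    (fun _ ↦ hs.inter measurableSet_Ioc), ENNReal.tsum_toReal_eq fun _ ↦ measure_ne_top _ _]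
  rfl

theorem measureReal_map_T_Iio [NullSingletonClass ν] (hν : ∀ᵐ t ∂ν, t ∈ Ioc 0 1) {x : ℝ}
    (hx : x ∈ Icc 0 1) :
    (ν.map T).real (Iio x) = transferCdf (fun y ↦ ν.real (Iio y)) x := by
  rw [map_measureReal_apply measurable_T measurableSet_Iio,
    measureReal_eq_tsum_inter_oddCell hν (measurable_T measurableSet_Iio)]
  exact tsum_congr (measureReal_T_preimage_Iio_inter_oddCell hx)

end Law

/-- Finite laws on `(0, 1]` with a `C¹` density on `[0, 1]`, expressed as `C²` regularity of the
distribution function. -/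
structure IsSmoothLaw (ν : Measure ℝ) : Prop where
  isFiniteMeasure : IsFiniteMeasure ν
  nullSingletonClass : NullSingletonClass ν
  ae_mem_Ioc : ∀ᵐ t ∂ν, t ∈ Ioc (0 : ℝ) 1
  contDiffOn_cdf : ContDiffOn ℝ 2 (fun x ↦ ν.real (Iio x)) (Icc 0 1)

namespace IsSmoothLaw

variable {ν : Measure ℝ}

theorem exists_hasDerivWithinAt_map_T (hν : IsSmoothLaw ν) :
    ∃ f, ContDiff ℝ 1 f ∧ ∀ x ∈ Icc (0 : ℝ) 1,
      HasDerivWithinAt (fun x ↦ (ν.map T).real (Iio x)) (transfer f x) (Icc 0 1) x := by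
  have := hν.isFiniteMeasure
  have := hν.nullSingletonClass
  obtain ⟨F, hF, heq⟩ := exists_contDiff_eqOn_Icc zero_lt_one (n := 2) hν.contDiffOn_cdf
  have hcdf (x : ℝ) (hx : x ∈ Icc 0 1) : (ν.map T).real (Iio x) = transferCdf F x :=
    (measureReal_map_T_Iio hν.ae_mem_Ioc hx).trans (transferCdf_congr heq hx)
  refine ⟨deriv F, ((contDiff_succ_iff_deriv (n := 1)).1 hF).2.2, fun x hx ↦ ?_⟩
  exact (hasDerivAt_transferCdf hF ⟨by linarith [hx.1], by linarith [hx.2]⟩).hasDerivWithinAt.congr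
    hcdf (hcdf x hx)

protected theorem map_T (hν : IsSmoothLaw ν) : IsSmoothLaw (ν.map T) where
  isFiniteMeasure :=
    have := hν.isFiniteMeasure
    inferInstance
  nullSingletonClass :=
    have := hν.nullSingletonClass
    nullSingletonClass_map_of_countable_fiber measurable_T countable_T_preimage_singleton
  ae_mem_Ioc := by
    have := hν.nullSingletonClass
    have hzero : ∀ᵐ t ∂ν, t ∉ T ⁻¹' {0} :=
      measure_eq_zero_iff_ae_notMem.1 ((countable_T_preimage_singleton 0).measure_zero ν)
    refine (ae_map_iff measurable_T.aemeasurable measurableSet_Ioc).2 ?_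
    filter_upwards [hzero] with t ht
    exact ⟨(T_mem_Icc t).1.lt_of_ne' ht, (T_mem_Icc t).2⟩
  contDiffOn_cdf := by
    obtain ⟨f, hf, hderiv⟩ := hν.exists_hasDerivWithinAt_map_T
    have hsub : Icc (0 : ℝ) 1 ⊆ Ioo (-1 / 2) (5 / 2) := Icc_subset_Ioo (by norm_num) (by norm_num)
    refine (contDiffOn_succ_iff_derivWithin (n := 1) (uniqueDiffOn_Icc zero_lt_one)).2
      ⟨fun x hx ↦ (hderiv x hx).differentiableWithinAt, by simp, ?_⟩
    exact ((contDiffOn_transfer hf).mono hsub).congr fun x hx ↦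
      (hderiv x hx).derivWithin (uniqueDiffOn_Icc zero_lt_one x hx)

protected theorem map_iterate_T (hν : IsSmoothLaw ν) (n : ℕ) : IsSmoothLaw (ν.map T^[n]) := by
  induction n with
  | zero => simpa using hν
  | succ n ih =>
    rw [Function.iterate_succ', ← Measure.map_map measurable_T (measurable_T.iterate n)]
    exact ih.map_T

end IsSmoothLaw

/-! ### The distribution functions `H` -/

theorem isSmoothLaw_restrict_Ioc {μ : Measure ℝ} [IsLocallyFiniteMeasure μ]
    (h0 : ContDiffOn ℝ 2 (H μ 0) (Icc 0 1)) : IsSmoothLaw (μ.restrict (Ioc 0 1)) := by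
  have hatom : NullSingletonClass (μ.restrict (Ioc 0 1)) := by
    refine ⟨fun c ↦ ?_⟩
    rw [Measure.restrict_apply (measurableSet_singleton c)]
    by_cases hc : c ∈ Ioc (0 : ℝ) 1
    · have hcont := (h0.continuousOn c (Ioc_subset_Icc_self hc)).mono (Icc_subset_Icc_right hc.2)
      exact measure_mono_null inter_subset_left
        (measure_singleton_eq_zero_of_continuousWithinAt hc.1 hcont)
    · rw [singleton_inter_eq_empty.2 hc, measure_empty]
  refine ⟨isFiniteMeasure_restrict.2 measure_Ioc_lt_top.ne, hatom,
    ae_restrict_mem measurableSet_Ioc,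
    (h0.sub (contDiffOn_const (c := H μ 0 0))).congr fun x hx ↦ ?_⟩
  have hIoc : Iic x ∩ Ioc 0 1 = Icc 0 x \ Icc 0 0 := by
    ext t
    simp only [mem_inter_iff, mem_Iic, mem_Ioc, Set.mem_sdiff, mem_Icc]
    grind
  calc (μ.restrict (Ioc 0 1)).real (Iio x) = (μ.restrict (Ioc 0 1)).real (Iic x) :=
        measureReal_congr Iio_ae_eq_Iic
    _ = μ.real (Icc 0 x \ Icc 0 0) := by
        rw [measureReal_restrict_apply measurableSet_Iic, hIoc]
    _ = H μ 0 x - H μ 0 0 :=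
        measureReal_sdiff (Icc_subset_Icc_right hx.1) measurableSet_Icc measure_Icc_lt_top.ne

theorem H_succ_eq_measureReal_map_T {μ : Measure ℝ} [NullSingletonClass (μ.restrict (Ioc 0 1))]
    (n : ℕ) (x : ℝ) :
    H μ (n + 1) x = (((μ.restrict (Ioc 0 1)).map T^[n]).map T).real (Iio x) := by
  have hirr : ∀ᵐ t ∂μ.restrict (Ioc 0 1), Irrational t :=
    (countable_range ((↑) : ℚ → ℝ)).ae_notMem _
  have hH : H μ (n + 1) x = (μ.restrict (Ioc 0 1)).real
      {y | y ∈ Ioo (0 : ℝ) 1 ∧ Irrational y ∧ 1 / r y (n + 2) < x} :=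
    congrArg ENNReal.toReal (Measure.restrict_eq_self μ fun y hy ↦ Ioo_subset_Ioc_self hy.1).symm
  rw [hH, Measure.map_map measurable_T (measurable_T.iterate n), ← Function.iterate_succ',
    map_measureReal_apply (measurable_T.iterate (n + 1)) measurableSet_Iio]
  refine measureReal_congr (eventuallyEq_set.2 ?_)
  filter_upwards [hirr, ae_restrict_mem measurableSet_Ioc] with t htirr ht
  rw [one_div_r_succ t (n + 1) (irrational_iterate_T htirr (n + 1)).ne_zero]
  exact ⟨fun h ↦ h.2.2, fun h ↦ ⟨⟨ht.1, ht.2.lt_of_ne htirr.ne_one⟩, htirr, h⟩⟩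

end OCF

theorem ocf_h_deriv_at_one_general (μ : Measure ℝ) [IsLocallyFiniteMeasure μ]
    (h0 : ContDiffOn ℝ 2 (H μ 0) (Icc (0 : ℝ) 1)) (n : ℕ) :
    HasDerivWithinAt (h μ (n + 1)) 0 (Icc (0 : ℝ) 1) 1 := by
  have hμ := isSmoothLaw_restrict_Ioc h0
  have := hμ.nullSingletonClass
  obtain ⟨f, hf, hderiv⟩ := (hμ.map_iterate_T n).exists_hasDerivWithinAt_map_T
  have hh (x : ℝ) (hx : x ∈ Icc 0 1) :
      h μ (n + 1) x = transfer f x / ((x + G - 1)⁻¹ - (x - G - 1)⁻¹) := by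
    have hH := (hderiv x hx).congr (fun y _ ↦ H_succ_eq_measureReal_map_T n y)
      (H_succ_eq_measureReal_map_T n x)
    rw [h, hH.derivWithin (uniqueDiffOn_Icc zero_lt_one x hx)]
  have hG : G ≠ 0 := goldenRatio_ne_zero
  exact (hasDerivAt_transfer_div_inv_sub_inv_one hf hG).hasDerivWithinAt.congr hh
    (hh 1 (right_mem_Icc.2 zero_le_one))

/-- If `H_0` is twice continuously differentiable on `[0,1]`, then for every `n ≥ 0` the
function `h_{n+1}` is differentiable at `1` (within `[0,1]`) with `h_{n+1}'(1) = 0`. -/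
theorem ocf_h_deriv_at_one (μ : Measure ℝ) [IsProbabilityMeasure μ] [NullSingletonClass μ]
    (hμ : μ (Set.Icc (0 : ℝ) 1)ᶜ = 0)
    (h0 : ContDiffOn ℝ 2 (H μ 0) (Set.Icc (0 : ℝ) 1)) (n : ℕ) :
    HasDerivWithinAt (h μ (n + 1)) 0 (Set.Icc (0 : ℝ) 1) 1 :=
  ocf_h_deriv_at_one_general μ h0 n
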